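/- Let ε_1 = ε_2 = −1, ε_3 = ε_4 = 1, let ξ ∈ ℝ, and for smooth functions v : ℂ⁴ → ℂ define ∂̄_j v = ∂v/∂z̄_j + ε_j ξ z_j v. Then for every smooth compactly supported v : ℂ⁴ → ℂ, ∑_{j=1}^4 ∫_{ℂ⁴} |∂̄_j v|² e^{|z|²} dλ(z) ≥ 4 ∫_{ℂ⁴} |v|² e^{|z|²} dλ(z). -/

import Mathlib

open MeasureTheory Complex Finset

noncomputable section

/-- Wirtinger derivative `∂v/∂z̄_j = (1/2)(∂/∂x_j + i ∂/∂y_j) v` on `ℂⁿ`. -/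
def wbar {n : ℕ} (j : Fin n) (v : (Fin n → ℂ) → ℂ) (z : Fin n → ℂ) : ℂ :=
  (1 / 2 : ℂ) * (fderiv ℝ v z (Pi.single j 1) + Complex.I * fderiv ℝ v z (Pi.single j Complex.I))

/-- Wirtinger derivative `∂v/∂z_j = (1/2)(∂/∂x_j − i ∂/∂y_j) v` on `ℂⁿ`. -/
def whol {n : ℕ} (j : Fin n) (v : (Fin n → ℂ) → ℂ) (z : Fin n → ℂ) : ℂ :=
  (1 / 2 : ℂ) * (fderiv ℝ v z (Pi.single j 1) - Complex.I * fderiv ℝ v z (Pi.single j Complex.I))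

/-- The operator `∂̄_j v = ∂v/∂z̄_j + λ_j z_j v`. -/
def dbarOp {n : ℕ} (lam : Fin n → ℝ) (j : Fin n) (v : (Fin n → ℂ) → ℂ) (z : Fin n → ℂ) : ℂ :=
  wbar j v z + (lam j : ℂ) * z j * v z

/-- The operator `δ_j v = −∂v/∂z_j + λ_j z̄_j v − z̄_j v`. -/
def deltaOp {n : ℕ} (lam : Fin n → ℝ) (j : Fin n) (v : (Fin n → ℂ) → ℂ) (z : Fin n → ℂ) : ℂ :=
  - whol j v z + (lam j : ℂ) * (starRingEnd ℂ) (z j) * v z - (starRingEnd ℂ) (z j) * v z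

/-- The weight `e^{|z|²}`. -/
def wgt {n : ℕ} (z : Fin n → ℂ) : ℝ := Real.exp (∑ j, Complex.normSq (z j))

/-- The signs ε₁ = ε₂ = −1, ε₃ = ε₄ = 1. -/
def eps : Fin 4 → ℝ := ![-1, -1, 1, 1]

/-!
Write `(f, g) = ∫ f ḡ e^{|z|²}`. Integrating `∂/∂z̄_j (f ḡ e^{|z|²})` shows that `δ_j` is the
formal adjoint of `∂̄_j`, and a direct computation gives `δ_j ∂̄_j - ∂̄_j δ_j = 1 - 2 λ_j`. Hence
`‖∂̄_j v‖² = (δ_j ∂̄_j v, v) = ‖δ_j v‖² + (1 - 2 λ_j) ‖v‖²`. Dropping `‖δ_j v‖²` and summing over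
`j`, the constant is `n - 2 ∑ λ_j`; for `λ_j = ε_j ξ` the sum vanishes because the signs balance.
-/

open scoped ComplexConjugate

section Calculus

variable {𝕜 E F : Type*} [NormedAddCommGroup E] [NormedAddCommGroup F]

lemma contDiff_fderiv_apply_const [NontriviallyNormedField 𝕜] [NormedSpace 𝕜 E] [NormedSpace 𝕜 F]
    {f : E → F} {k m : WithTop ℕ∞} (hf : ContDiff 𝕜 m f) (hkm : k + 1 ≤ m) (e : E) :
    ContDiff 𝕜 k (fun x => fderiv 𝕜 f x e) :=
  (hf.fderiv_right hkm).clm_apply contDiff_const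

lemma differentiableAt_fderiv_of_contDiffAt [NontriviallyNormedField 𝕜] [NormedSpace 𝕜 E]
    [NormedSpace 𝕜 F] {f : E → F} {x : E} (hf : ContDiffAt 𝕜 2 f x) :
    DifferentiableAt 𝕜 (fderiv 𝕜 f) x :=
  (hf.fderiv_right one_add_one_eq_two.le).differentiableAt one_ne_zero

lemma differentiableAt_fderiv_apply_const [NontriviallyNormedField 𝕜] [NormedSpace 𝕜 E]
    [NormedSpace 𝕜 F] {f : E → F} {x : E} (hf : ContDiffAt 𝕜 2 f x) (e : E) :
    DifferentiableAt 𝕜 (fun y => fderiv 𝕜 f y e) x :=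
  (differentiableAt_fderiv_of_contDiffAt hf).clm_apply (differentiableAt_const e)

lemma fderiv_fderiv_apply_comm [RCLike 𝕜] [NormedSpace 𝕜 E] [NormedSpace 𝕜 F]
    {f : E → F} {x : E} (hf : ContDiffAt 𝕜 2 f x) (a b : E) :
    fderiv 𝕜 (fun y => fderiv 𝕜 f y a) x b = fderiv 𝕜 (fun y => fderiv 𝕜 f y b) x a := by
  have happly (c d : E) :
      fderiv 𝕜 (fun y => fderiv 𝕜 f y c) x d = fderiv 𝕜 (fderiv 𝕜 f) x d c := by
    rw [fderiv_clm_apply (differentiableAt_fderiv_of_contDiffAt hf) (differentiableAt_const c)]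
    simp
  have hsymm : IsSymmSndFDerivAt 𝕜 f x := hf.isSymmSndFDerivAt (by simp)
  rw [happly, happly, hsymm b a]

variable [NormedSpace ℝ E] [NormedSpace ℝ F] [MeasurableSpace E] [BorelSpace E] {f : E → F}

lemma integrable_fderiv_apply (hf : ContDiff ℝ 1 f) (hfc : HasCompactSupport f) (μ : Measure E)
    [IsFiniteMeasureOnCompacts μ] (e : E) : Integrable (fun x => fderiv ℝ f x e) μ :=
  (contDiff_fderiv_apply_const (k := 0) hf le_rfl e).continuous.integrable_of_hasCompactSupport
    (hfc.fderiv_apply (𝕜 := ℝ) e)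

lemma integral_fderiv_apply_eq_zero [FiniteDimensional ℝ E] (hf : ContDiff ℝ 1 f)
    (hfc : HasCompactSupport f) (μ : Measure E) [μ.IsAddHaarMeasure] (e : E) :
    ∫ x, fderiv ℝ f x e ∂μ = 0 := by
  have h := integral_smul_fderiv_eq_neg_fderiv_smul_of_integrable (μ := μ) (𝕜 := ℝ)
    (f := fun _ : E => (1 : ℝ)) (g := f) (v := e) (by simp)
    (by simpa using integrable_fderiv_apply hf hfc μ e)
    (by simpa using hf.continuous.integrable_of_hasCompactSupport hfc)
    (fun _ _ => differentiableAt_const _) (fun x _ => hf.differentiable one_ne_zero x)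
  simpa using h

end Calculus

section Wirtinger

variable {n : ℕ} {f g : (Fin n → ℂ) → ℂ} {z : Fin n → ℂ}

lemma wbar_sub (hf : DifferentiableAt ℝ f z) (hg : DifferentiableAt ℝ g z) (j : Fin n) :
    wbar j (fun w => f w - g w) z = wbar j f z - wbar j g z := by
  simp only [wbar, fderiv_fun_sub hf hg, sub_apply]
  ring

lemma whol_add (hf : DifferentiableAt ℝ f z) (hg : DifferentiableAt ℝ g z) (j : Fin n) :
    whol j (fun w => f w + g w) z = whol j f z + whol j g z := by
  simp only [whol, fderiv_fun_add hf hg, add_apply]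
  ring

lemma wbar_sum {ι : Type*} {s : Finset ι} {F : ι → (Fin n → ℂ) → ℂ}
    (hF : ∀ i ∈ s, DifferentiableAt ℝ (F i) z) (j : Fin n) :
    wbar j (fun w => ∑ i ∈ s, F i w) z = ∑ i ∈ s, wbar j (F i) z := by
  simp only [wbar, fderiv_fun_sum hF, _root_.sum_apply, mul_sum, ← sum_add_distrib]

lemma wbar_mul (hf : DifferentiableAt ℝ f z) (hg : DifferentiableAt ℝ g z) (j : Fin n) :
    wbar j (fun w => f w * g w) z = wbar j f z * g z + f z * wbar j g z := by
  simp only [wbar, fderiv_fun_mul hf hg, add_apply, smul_apply, smul_eq_mul]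
  ring

lemma whol_mul (hf : DifferentiableAt ℝ f z) (hg : DifferentiableAt ℝ g z) (j : Fin n) :
    whol j (fun w => f w * g w) z = whol j f z * g z + f z * whol j g z := by
  simp only [whol, fderiv_fun_mul hf hg, add_apply, smul_apply, smul_eq_mul]
  ring

lemma wbar_const_mul (hf : DifferentiableAt ℝ f z) (c : ℂ) (j : Fin n) :
    wbar j (fun w => c * f w) z = c * wbar j f z := by
  simp only [wbar, fderiv_const_mul hf, smul_apply, smul_eq_mul]
  ring

lemma whol_const_mul (hf : DifferentiableAt ℝ f z) (c : ℂ) (j : Fin n) :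
    whol j (fun w => c * f w) z = c * whol j f z := by
  simp only [whol, fderiv_const_mul hf, smul_apply, smul_eq_mul]
  ring

lemma wbar_cexp (hf : DifferentiableAt ℝ f z) (j : Fin n) :
    wbar j (fun w => cexp (f w)) z = cexp (f z) * wbar j f z := by
  simp only [wbar, hf.hasFDerivAt.cexp.fderiv, smul_apply, smul_eq_mul]
  ring

lemma wbar_conj (j : Fin n) : wbar j (fun w => conj (f w)) z = conj (whol j f z) := by
  have hfderiv (e : Fin n → ℂ) :
      fderiv ℝ (fun w => conj (f w)) z e = conj (fderiv ℝ f z e) := by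
    simp only [starRingEnd_apply, fderiv_star]
    simp
  simp only [wbar, whol, hfderiv, map_mul, map_sub, map_div₀, map_one, map_ofNat, conj_I]
  ring

lemma fderiv_coord_apply (i : Fin n) (e : Fin n → ℂ) : fderiv ℝ (fun w => w i) z e = e i := by
  simp [fderiv_apply]

lemma wbar_coord (i j : Fin n) : wbar j (fun w => w i) z = 0 := by
  obtain rfl | hij := eq_or_ne i j
  · simp [wbar, fderiv_coord_apply]
  · simp [wbar, fderiv_coord_apply, Pi.single_eq_of_ne hij]

lemma whol_coord (i j : Fin n) : whol j (fun w => w i) z = if i = j then 1 else 0 := by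
  obtain rfl | hij := eq_or_ne i j
  · norm_num [whol, fderiv_coord_apply]
  · simp [whol, fderiv_coord_apply, hij]

lemma wbar_conj_coord (i j : Fin n) :
    wbar j (fun w => conj (w i)) z = if i = j then 1 else 0 := by
  rw [wbar_conj, whol_coord, apply_ite conj, map_one, map_zero]

lemma differentiableAt_conj_coord (i : Fin n) :
    DifferentiableAt ℝ (fun w : Fin n → ℂ => conj (w i)) z :=
  (differentiableAt_apply i z).star

lemma contDiff_wbar {k m : WithTop ℕ∞} (hf : ContDiff ℝ m f) (hkm : k + 1 ≤ m) (j : Fin n) :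
    ContDiff ℝ k (wbar j f) :=
  contDiff_const.mul ((contDiff_fderiv_apply_const hf hkm _).add
    (contDiff_const.mul (contDiff_fderiv_apply_const hf hkm _)))

lemma contDiff_whol {k m : WithTop ℕ∞} (hf : ContDiff ℝ m f) (hkm : k + 1 ≤ m) (j : Fin n) :
    ContDiff ℝ k (whol j f) :=
  contDiff_const.mul ((contDiff_fderiv_apply_const hf hkm _).sub
    (contDiff_const.mul (contDiff_fderiv_apply_const hf hkm _)))

lemma hasCompactSupport_whol (hfc : HasCompactSupport f) (j : Fin n) :
    HasCompactSupport (whol j f) :=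
  ((hfc.fderiv_apply (𝕜 := ℝ) _).sub (hfc.fderiv_apply (𝕜 := ℝ) _).mul_left).mul_left

lemma differentiableAt_wbar (hf : ContDiffAt ℝ 2 f z) (j : Fin n) :
    DifferentiableAt ℝ (wbar j f) z :=
  ((differentiableAt_fderiv_apply_const hf _).fun_add
    ((differentiableAt_fderiv_apply_const hf _).const_mul _)).const_mul _

lemma differentiableAt_whol (hf : ContDiffAt ℝ 2 f z) (j : Fin n) :
    DifferentiableAt ℝ (whol j f) z :=
  ((differentiableAt_fderiv_apply_const hf _).fun_sub
    ((differentiableAt_fderiv_apply_const hf _).const_mul _)).const_mul _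

lemma wbar_fderiv_apply (hf : ContDiffAt ℝ 2 f z) (j : Fin n) (e : Fin n → ℂ) :
    wbar j (fun w => fderiv ℝ f w e) z = fderiv ℝ (wbar j f) z e := by
  have hd := differentiableAt_fderiv_apply_const hf
  unfold wbar
  rw [fderiv_const_mul ((hd _).fun_add ((hd _).const_mul _)),
    fderiv_fun_add (hd _) ((hd _).const_mul _), fderiv_const_mul (hd _)]
  simp only [add_apply, smul_apply, smul_eq_mul, fderiv_fderiv_apply_comm hf e]

lemma wbar_whol_comm (hf : ContDiffAt ℝ 2 f z) (i j : Fin n) :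
    wbar i (whol j f) z = whol j (wbar i f) z := by
  have hd := differentiableAt_fderiv_apply_const hf
  unfold whol
  rw [wbar_const_mul ((hd _).fun_sub ((hd _).const_mul _)), wbar_sub (hd _) ((hd _).const_mul _),
    wbar_const_mul (hd _), wbar_fderiv_apply hf, wbar_fderiv_apply hf]

lemma integrable_wbar (hf : ContDiff ℝ 1 f) (hfc : HasCompactSupport f) (j : Fin n) :
    Integrable (wbar j f) :=
  ((integrable_fderiv_apply hf hfc volume _).add
    ((integrable_fderiv_apply hf hfc volume _).const_mul _)).const_mul _

lemma integral_wbar_eq_zero (hf : ContDiff ℝ 1 f) (hfc : HasCompactSupport f) (j : Fin n) :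
    ∫ w, wbar j f w = 0 := by
  have hint (e : Fin n → ℂ) := integrable_fderiv_apply hf hfc volume e
  unfold wbar
  rw [integral_const_mul, integral_add (hint _) ((hint _).const_mul _), integral_const_mul,
    integral_fderiv_apply_eq_zero hf hfc, integral_fderiv_apply_eq_zero hf hfc, mul_zero,
    add_zero, mul_zero]

end Wirtinger

section Weight

variable {n : ℕ}

lemma wgt_pos (z : Fin n → ℂ) : 0 < wgt z := Real.exp_pos _

lemma ofReal_wgt (z : Fin n → ℂ) : (wgt z : ℂ) = cexp (∑ i, z i * conj (z i)) := by
  simp [wgt, mul_conj]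

lemma contDiff_ofReal_wgt {m : WithTop ℕ∞} :
    ContDiff ℝ m (fun z : Fin n → ℂ => (wgt z : ℂ)) := by
  have hconj : ContDiff ℝ m (conj : ℂ → ℂ) := conjCLE.contDiff
  simp only [ofReal_wgt]
  fun_prop

lemma wbar_ofReal_wgt (j : Fin n) (z : Fin n → ℂ) :
    wbar j (fun w => (wgt w : ℂ)) z = z j * wgt z := by
  have hd (i : Fin n) : DifferentiableAt ℝ (fun w : Fin n → ℂ => w i * conj (w i)) z :=
    (differentiableAt_apply i z).fun_mul (differentiableAt_conj_coord i)
  have hcoord (i : Fin n) :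
      wbar j (fun w : Fin n → ℂ => w i * conj (w i)) z = if i = j then z i else 0 := by
    rw [wbar_mul (differentiableAt_apply i z) (differentiableAt_conj_coord i), wbar_coord,
      wbar_conj_coord]
    simp
  simp only [ofReal_wgt]
  rw [wbar_cexp (.fun_sum fun i _ => hd i), wbar_sum fun i _ => hd i]
  simp [hcoord, mul_comm]

end Weight

section Operators

variable {n : ℕ} {f g h : (Fin n → ℂ) → ℂ} {k m : WithTop ℕ∞}

lemma contDiff_dbarOp (hf : ContDiff ℝ m f) (hkm : k + 1 ≤ m) (lam : Fin n → ℝ) (j : Fin n) :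
    ContDiff ℝ k (dbarOp lam j f) :=
  (contDiff_wbar hf hkm j).add
    ((contDiff_const.mul (contDiff_apply ℝ ℂ j)).mul (hf.of_le (le_self_add.trans hkm)))

lemma deltaOp_eq_sub_whol (lam : Fin n → ℝ) (j : Fin n) (f : (Fin n → ℂ) → ℂ) :
    deltaOp lam j f = fun z => ((lam j : ℂ) - 1) * conj (z j) * f z - whol j f z := by
  funext z
  simp only [deltaOp]
  ring

lemma contDiff_deltaOp (hf : ContDiff ℝ m f) (hkm : k + 1 ≤ m) (lam : Fin n → ℝ) (j : Fin n) :
    ContDiff ℝ k (deltaOp lam j f) := by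
  have hconj : ContDiff ℝ k (fun z : Fin n → ℂ => conj (z j)) :=
    conjCLE.contDiff.comp (contDiff_apply ℝ ℂ j)
  rw [deltaOp_eq_sub_whol]
  exact ((contDiff_const.mul hconj).mul (hf.of_le (le_self_add.trans hkm))).sub
    (contDiff_whol hf hkm j)

lemma hasCompactSupport_deltaOp (hfc : HasCompactSupport f) (lam : Fin n → ℝ) (j : Fin n) :
    HasCompactSupport (deltaOp lam j f) := by
  rw [deltaOp_eq_sub_whol]
  exact hfc.mul_left.sub (hasCompactSupport_whol hfc j)

lemma whol_dbarOp {z : Fin n → ℂ} (hf : ContDiffAt ℝ 2 f z) (lam : Fin n → ℝ) (j : Fin n) :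
    whol j (dbarOp lam j f) z =
      whol j (wbar j f) z + lam j * (f z + z j * whol j f z) := by
  have hf' : DifferentiableAt ℝ f z := hf.differentiableAt two_ne_zero
  have hcoord : DifferentiableAt ℝ (fun w : Fin n → ℂ => w j) z := differentiableAt_apply j z
  unfold dbarOp
  rw [whol_add (differentiableAt_wbar hf j) ((hcoord.const_mul _).fun_mul hf'),
    whol_mul (hcoord.const_mul _) hf', whol_const_mul hcoord, whol_coord, if_pos rfl]
  ring

lemma wbar_deltaOp {z : Fin n → ℂ} (hf : ContDiffAt ℝ 2 f z) (lam : Fin n → ℝ) (j : Fin n) :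
    wbar j (deltaOp lam j f) z =
      (lam j - 1) * (f z + conj (z j) * wbar j f z) - wbar j (whol j f) z := by
  have hf' : DifferentiableAt ℝ f z := hf.differentiableAt two_ne_zero
  have hconj : DifferentiableAt ℝ (fun w : Fin n → ℂ => conj (w j)) z :=
    differentiableAt_conj_coord j
  rw [deltaOp_eq_sub_whol, wbar_sub ((hconj.const_mul _).fun_mul hf') (differentiableAt_whol hf j),
    wbar_mul (hconj.const_mul _) hf', wbar_const_mul hconj, wbar_conj_coord, if_pos rfl]
  ring

lemma deltaOp_dbarOp (hf : ContDiff ℝ 2 f) (lam : Fin n → ℝ) (j : Fin n) :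
    deltaOp lam j (dbarOp lam j f) =
      dbarOp lam j (deltaOp lam j f) + ((1 - 2 * lam j : ℝ) : ℂ) • f := by
  funext z
  rw [Pi.add_apply, Pi.smul_apply, deltaOp, whol_dbarOp hf.contDiffAt, dbarOp, dbarOp,
    wbar_deltaOp hf.contDiffAt, wbar_whol_comm hf.contDiffAt, deltaOp]
  push_cast [smul_eq_mul]
  ring

/-- The sesquilinear pairing `(f, g) = ∫ f ḡ e^{|z|²}` of the weighted space `L²(ℂⁿ, e^{|z|²})`, for
which `deltaOp` is the formal adjoint of `dbarOp`. It is linear in the first argument, as in the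
literature on the `∂̄`-equation and unlike Mathlib's `inner`. -/
def weightedInner (f g : (Fin n → ℂ) → ℂ) : ℂ :=
  ∫ z, f z * conj (g z) * wgt z

lemma conj_weightedInner (f g : (Fin n → ℂ) → ℂ) :
    conj (weightedInner f g) = weightedInner g f := by
  simp only [weightedInner, ← integral_conj, map_mul, conj_conj, conj_ofReal]
  simp only [mul_comm]

lemma weightedInner_self (f : (Fin n → ℂ) → ℂ) :
    weightedInner f f = ((∫ z, ‖f z‖ ^ 2 * wgt z : ℝ) : ℂ) := by
  simp only [weightedInner, mul_conj', ← integral_complex_ofReal, ofReal_mul, ofReal_pow]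

lemma weightedInner_smul_right (c : ℂ) (f g : (Fin n → ℂ) → ℂ) :
    weightedInner f (c • g) = conj c * weightedInner f g := by
  simp only [weightedInner, Pi.smul_apply, smul_eq_mul, map_mul, ← integral_const_mul,
    mul_left_comm, mul_assoc]

lemma integrable_mul_conj_mul_wgt (hf : Continuous f) (hfc : HasCompactSupport f)
    (hg : Continuous g) : Integrable (fun z => f z * conj (g z) * wgt z) :=
  ((hf.mul (continuous_conj.comp hg)).mul
    (contDiff_ofReal_wgt (m := 0)).continuous).integrable_of_hasCompactSupport
    hfc.mul_right.mul_right

lemma weightedInner_add_right (hf : Continuous f) (hfc : HasCompactSupport f) (hg : Continuous g)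
    (hh : Continuous h) : weightedInner f (g + h) = weightedInner f g + weightedInner f h := by
  simp only [weightedInner, Pi.add_apply, map_add, mul_add, add_mul]
  exact integral_add (integrable_mul_conj_mul_wgt hf hfc hg) (integrable_mul_conj_mul_wgt hf hfc hh)

lemma wbar_mul_conj_mul_wgt {z : Fin n → ℂ} (hf : DifferentiableAt ℝ f z)
    (hg : DifferentiableAt ℝ g z) (lam : Fin n → ℝ) (j : Fin n) :
    wbar j (fun w => f w * conj (g w) * wgt w) z =
      dbarOp lam j f z * conj (g z) * wgt z - f z * conj (deltaOp lam j g z) * wgt z := by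
  have hgconj : DifferentiableAt ℝ (fun w => conj (g w)) z := hg.star
  rw [wbar_mul (hf.fun_mul hgconj) (contDiff_ofReal_wgt.differentiable one_ne_zero z),
    wbar_mul hf hgconj, wbar_conj, wbar_ofReal_wgt]
  simp only [dbarOp, deltaOp, map_add, map_sub, map_mul, map_neg, conj_conj, conj_ofReal]
  ring

lemma weightedInner_dbarOp_left (hf : ContDiff ℝ 1 f) (hfc : HasCompactSupport f)
    (hg : ContDiff ℝ 1 g) (lam : Fin n → ℝ) (j : Fin n) :
    weightedInner (dbarOp lam j f) g = weightedInner f (deltaOp lam j g) := by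
  have hF : ContDiff ℝ 1 (fun z => f z * conj (g z) * wgt z) :=
    (hf.mul (conjCLE.contDiff.comp hg)).mul contDiff_ofReal_wgt
  have hFc : HasCompactSupport (fun z => f z * conj (g z) * wgt z) := hfc.mul_right.mul_right
  have hδ : Continuous (deltaOp lam j g) := (contDiff_deltaOp (k := 0) hg le_rfl lam j).continuous
  calc weightedInner (dbarOp lam j f) g
    _ = ∫ z, (wbar j (fun w => f w * conj (g w) * wgt w) z +
          f z * conj (deltaOp lam j g z) * wgt z) := by
      refine integral_congr_ae (.of_forall fun z => ?_)
      exact eq_add_of_sub_eq (wbar_mul_conj_mul_wgt (hf.differentiable one_ne_zero z)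
        (hg.differentiable one_ne_zero z) lam j).symm
    _ = weightedInner f (deltaOp lam j g) := by
      rw [integral_add (integrable_wbar hF hFc j)
        (integrable_mul_conj_mul_wgt hf.continuous hfc hδ), integral_wbar_eq_zero hF hFc, zero_add,
        weightedInner]

lemma weightedInner_dbarOp_right (hf : ContDiff ℝ 1 f) (hg : ContDiff ℝ 1 g)
    (hgc : HasCompactSupport g) (lam : Fin n → ℝ) (j : Fin n) :
    weightedInner f (dbarOp lam j g) = weightedInner (deltaOp lam j f) g := by
  rw [← conj_weightedInner, weightedInner_dbarOp_left hg hgc hf, conj_weightedInner]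

lemma weightedInner_dbarOp_self (hf : ContDiff ℝ 2 f) (hfc : HasCompactSupport f)
    (lam : Fin n → ℝ) (j : Fin n) :
    weightedInner (dbarOp lam j f) (dbarOp lam j f) =
      weightedInner (deltaOp lam j f) (deltaOp lam j f) +
        ((1 - 2 * lam j : ℝ) : ℂ) * weightedInner f f := by
  have hf₁ : ContDiff ℝ 1 f := hf.of_le one_le_two
  have hD : ContDiff ℝ 1 (dbarOp lam j f) := contDiff_dbarOp hf one_add_one_eq_two.le lam j
  have hδ : ContDiff ℝ 1 (deltaOp lam j f) := contDiff_deltaOp hf one_add_one_eq_two.le lam j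
  have hDδ : Continuous (dbarOp lam j (deltaOp lam j f)) :=
    (contDiff_dbarOp (k := 0) hδ le_rfl lam j).continuous
  calc weightedInner (dbarOp lam j f) (dbarOp lam j f)
    _ = weightedInner f (deltaOp lam j (dbarOp lam j f)) :=
      weightedInner_dbarOp_left hf₁ hfc hD lam j
    _ = weightedInner f (dbarOp lam j (deltaOp lam j f)) +
          ((1 - 2 * lam j : ℝ) : ℂ) * weightedInner f f := by
      rw [deltaOp_dbarOp hf,
        weightedInner_add_right hf.continuous hfc hDδ (hf.continuous.const_smul _),
        weightedInner_smul_right, conj_ofReal]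
    _ = weightedInner (deltaOp lam j f) (deltaOp lam j f) +
          ((1 - 2 * lam j : ℝ) : ℂ) * weightedInner f f := by
      rw [weightedInner_dbarOp_right hf₁ hδ (hasCompactSupport_deltaOp hfc lam j)]

lemma integral_norm_sq_dbarOp (hf : ContDiff ℝ 2 f) (hfc : HasCompactSupport f)
    (lam : Fin n → ℝ) (j : Fin n) :
    ∫ z, ‖dbarOp lam j f z‖ ^ 2 * wgt z =
      (∫ z, ‖deltaOp lam j f z‖ ^ 2 * wgt z) + (1 - 2 * lam j) * ∫ z, ‖f z‖ ^ 2 * wgt z := by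
  have h := weightedInner_dbarOp_self hf hfc lam j
  simp only [weightedInner_self] at h
  exact_mod_cast h

end Operators

theorem function_estimate_C4_general {n : ℕ} (lam : Fin n → ℝ) (v : (Fin n → ℂ) → ℂ)
    (hv : ContDiff ℝ 2 v) (hvcs : HasCompactSupport v) :
    (n - 2 * ∑ j, lam j) * ∫ z, ‖v z‖ ^ 2 * wgt z
      ≤ ∑ j, ∫ z, ‖dbarOp lam j v z‖ ^ 2 * wgt z := by
  calc (n - 2 * ∑ j, lam j) * ∫ z, ‖v z‖ ^ 2 * wgt z
    _ = ∑ j, (1 - 2 * lam j) * ∫ z, ‖v z‖ ^ 2 * wgt z := by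
      rw [← sum_mul, sum_sub_distrib, ← mul_sum]
      simp
    _ ≤ ∑ j, ∫ z, ‖dbarOp lam j v z‖ ^ 2 * wgt z := by
      refine sum_le_sum fun j _ => ?_
      rw [integral_norm_sq_dbarOp hv hvcs]
      exact le_add_of_nonneg_left
        (integral_nonneg fun z => mul_nonneg (sq_nonneg _) (wgt_pos z).le)

theorem function_estimate_C4 (ξ : ℝ)
    (v : (Fin 4 → ℂ) → ℂ) (hv : ContDiff ℝ (⊤ : ℕ∞) v) (hvcs : HasCompactSupport v) :
    4 * ∫ z : Fin 4 → ℂ, ‖v z‖ ^ 2 * wgt z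
      ≤ ∑ j, ∫ z : Fin 4 → ℂ, ‖dbarOp (fun i => eps i * ξ) j v z‖ ^ 2 * wgt z := by
  have hbalance : ∑ j, eps j * ξ = 0 := by simp [Fin.sum_univ_four, eps]
  simpa [hbalance] using function_estimate_C4_general (fun i => eps i * ξ) v
    (hv.of_le (by norm_cast)) hvcs
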